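/- arXiv:1610.03830 — 2 statements merged into one kernel-verified Lean document; each statement's English description precedes it below -/
import Mathlib

section
/- Let n ≥ 3, let l : ℤ/n → {1,…,n} be a bijection, let 1 ≤ i ≤ n−2, and let k ∈ ℤ/n be the unique index with l(k) = i+1. If both cyclic neighbors of k lie at lower levels, i.e. l(k−1) < l(k) and l(k+1) < l(k), then m_i(l) = m_{i+1}(l) + 4. -/
/-- The cyclic successor `j + 1` in `ℤ/n` (modeled as `Fin n`). -/
def cyc {n : ℕ} (j : Fin n) : Fin n :=
  ⟨(j.val + 1) % n, Nat.mod_lt _ (Nat.zero_lt_of_lt j.isLt)⟩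

/-- The cyclic predecessor `j - 1` in `ℤ/n` (modeled as `Fin n`). -/
def cycPred {n : ℕ} (j : Fin n) : Fin n :=
  ⟨(j.val + (n - 1)) % n, Nat.mod_lt _ (Nat.zero_lt_of_lt j.isLt)⟩

/-- The size `m i` of the `i`-th crossing-centered bipyramid of the `n`-crossing with
level function `l : ℤ/n → {1, …, n}`:
`m_i(l) = 2·|{ j : min(l j, l (j+1)) ≤ i  and  i+1 ≤ max(l j, l (j+1)) }|`. -/
def bipSize (n : ℕ) (l : Fin n → ℕ) (i : ℕ) : ℕ :=
  2 * (Finset.univ.filter fun j : Fin n =>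
      min (l j) (l (cyc j)) ≤ i ∧ i + 1 ≤ max (l j) (l (cyc j))).card

/-!
The size `m_i` is twice the number of edges of the `n`-cycle joining the superlevel set
`{j | i < l j}` to its complement. Lowering the threshold from `i + 1` to `i` adds only the strand
`k` to this set, and neither neighbor of `k` belongs to it, so the cut gains exactly the two edges
at `k`.
-/

/-- The cut of `s` in the directed graph with edges `j → σ j`: the edges with exactly one endpoint
in `s`, each encoded by its source `j`. For the cyclic successor on `ℤ/n` and a superlevel set of
the level function, these are the pairs counted by `bipSize`. -/
def edgeCut {α : Type*} [DecidableEq α] (σ : Equiv.Perm α) (s : Finset α) : Finset α :=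
  symmDiff s (s.map σ.symm.toEmbedding)

namespace edgeCut

variable {α : Type*} [DecidableEq α] {σ : Equiv.Perm α} {s : Finset α} {j k : α}

theorem mem_iff : j ∈ edgeCut σ s ↔ ¬(j ∈ s ↔ σ j ∈ s) := by
  have hmap : j ∈ s.map σ.symm.toEmbedding ↔ σ j ∈ s := by
    rw [Finset.mem_map_equiv, Equiv.symm_symm]
  rw [edgeCut, Finset.mem_symmDiff, hmap]
  tauto

theorem insert_eq (hnext : σ k ∉ s) (hprev : σ.symm k ∉ s) (hfix : σ k ≠ k) :
    edgeCut σ (insert k s) = insert k (insert (σ.symm k) (edgeCut σ s)) := by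
  ext j
  simp only [mem_iff, Finset.mem_insert]
  rcases eq_or_ne j k with rfl | hj
  · simp only [hnext, hfix, true_or, or_self, iff_false, not_true_eq_false, not_false_eq_true]
  rcases eq_or_ne j (σ.symm k) with rfl | hj'
  · simp only [hj, hprev, Equiv.apply_symm_apply, true_or, or_true, or_self, iff_true,
      not_false_eq_true]
  · have hσj : σ j ≠ k := fun h => hj' (σ.eq_symm_apply.mpr h)
    simp only [hj, hj', hσj, false_or]

theorem card_insert (hk : k ∉ s) (hnext : σ k ∉ s) (hprev : σ.symm k ∉ s) (hfix : σ k ≠ k) :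
    (edgeCut σ (insert k s)).card = (edgeCut σ s).card + 2 := by
  have hk_notMem : k ∉ edgeCut σ s := by
    simp only [mem_iff, hk, hnext, not_true_eq_false, not_false_eq_true]
  have hpred_notMem : σ.symm k ∉ edgeCut σ s := by
    simp only [mem_iff, hprev, Equiv.apply_symm_apply, hk, not_true_eq_false, not_false_eq_true]
  have hne : k ≠ σ.symm k := fun h => hfix (σ.eq_symm_apply.mp h)
  rw [insert_eq hnext hprev hfix, Finset.card_insert_of_notMem,
    Finset.card_insert_of_notMem hpred_notMem]
  simp only [Finset.mem_insert, hne, hk_notMem, or_self, not_false_eq_true]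

end edgeCut

theorem filter_le_eq_insert_filter_lt {α β : Type*} [Fintype α] [DecidableEq α] [PartialOrder β]
    [DecidableLE β] [DecidableLT β] {f : α → β} {b : β} {k : α} (hk : ∀ j, f j = b ↔ j = k) :
    (Finset.univ.filter fun j => b ≤ f j) = insert k (Finset.univ.filter fun j => b < f j) := by
  ext j
  simp only [Finset.mem_filter_univ, Finset.mem_insert, le_iff_eq_or_lt, eq_comm (a := b), hk]

theorem cyc_eq_finRotate {n : ℕ} (j : Fin n) : cyc j = finRotate n j := by
  have := j.neZero
  rw [finRotate_apply, Fin.ext_iff, Fin.val_add, Fin.val_one', Nat.add_mod_mod, cyc]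

theorem cyc_cycPred {n : ℕ} (k : Fin n) : cyc (cycPred k) = k := by
  have hk := k.isLt
  apply Fin.ext
  simp only [cyc, cycPred, Nat.mod_add_mod]
  rw [show k.val + (n - 1) + 1 = k.val + n by omega, Nat.add_mod_right, Nat.mod_eq_of_lt hk]

theorem cycPred_eq_finRotate_symm {n : ℕ} (k : Fin n) : cycPred k = (finRotate n).symm k := by
  rw [Equiv.eq_symm_apply, ← cyc_eq_finRotate, cyc_cycPred]

theorem bipSize_eq_two_mul_card_edgeCut (n : ℕ) (l : Fin n → ℕ) (i : ℕ) :
    bipSize n l i = 2 * (edgeCut (finRotate n) (Finset.univ.filter fun j => i < l j)).card := by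
  have hset : (Finset.univ.filter fun j : Fin n =>
      min (l j) (l (cyc j)) ≤ i ∧ i + 1 ≤ max (l j) (l (cyc j))) =
      edgeCut (finRotate n) (Finset.univ.filter fun j => i < l j) := by
    ext j
    simp only [edgeCut.mem_iff, Finset.mem_filter_univ, ← cyc_eq_finRotate]
    omega
  rw [bipSize, hset]

theorem bipyramid_size_drop_of_local_max_general {n : ℕ} {l : Fin n → ℕ} {i : ℕ} {k : Fin n}
    (hk : ∀ j, l j = i + 1 ↔ j = k) (hprev : l (cycPred k) < l k) (hnext : l (cyc k) < l k) :
    bipSize n l i = bipSize n l (i + 1) + 4 := by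
  have hlk : l k = i + 1 := (hk k).mpr rfl
  have hfix : finRotate n k ≠ k := fun h => by
    rw [cyc_eq_finRotate, h] at hnext
    exact hnext.false
  have hinsert : (Finset.univ.filter fun j => i < l j) =
      insert k (Finset.univ.filter fun j => i + 1 < l j) :=
    filter_le_eq_insert_filter_lt hk
  have hnotMem {j : Fin n} (hj : l j ≤ l k) :
      j ∉ Finset.univ.filter fun j => i + 1 < l j := by
    rw [Finset.mem_filter_univ, not_lt, ← hlk]
    exact hj
  rw [cyc_eq_finRotate] at hnext
  rw [cycPred_eq_finRotate_symm] at hprev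
  rw [bipSize_eq_two_mul_card_edgeCut, bipSize_eq_two_mul_card_edgeCut, hinsert,
    edgeCut.card_insert (hnotMem le_rfl) (hnotMem hnext.le) (hnotMem hprev.le) hfix]
  ring

/-- if both cyclic neighbors of the strand at level `i+1` lie at lower
levels, then `m_i(l) = m_{i+1}(l) + 4`. -/
theorem bipyramid_size_drop_of_local_max
    (n : ℕ) (hn : 3 ≤ n) (l : Fin n → ℕ)
    (hl : Set.BijOn l Set.univ (Set.Icc 1 n))
    (i : ℕ) (hi1 : 1 ≤ i) (hi2 : i ≤ n - 2)
    (k : Fin n) (hk : l k = i + 1)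
    (hprev : l (cycPred k) < l k) (hnext : l (cyc k) < l k) :
    bipSize n l i = bipSize n l (i + 1) + 4 := by
  have hiff : ∀ j, l j = i + 1 ↔ j = k := fun j => hk ▸ (Set.injOn_univ.mp hl.injOn).eq_iff
  exact bipyramid_size_drop_of_local_max_general hiff hprev hnext
end

section
/- (Characterization of realizable size signatures.) Let n ≥ 2. A sequence (m_1, m_2, …, m_{n−1}) of positive integers is realized as the size signature of some n-crossing (i.e. there exists a bijection l : ℤ/n → {1,…,n} with m_i(l) = m_i for all 1 ≤ i ≤ n−1) if and only if m_1 = m_{n−1} = 4 and |m_i − m_{i+1}| = 0 or 4 for every 1 ≤ i ≤ n−2. -/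
/-!
A level is crossed upwards as often as downwards around the crossing, so the size of the `i`-th
bipyramid is four times the number `c i` of strands at level at most `i` followed by a strand above
level `i`. Passing from `i` to `i + 1` only involves the strand at level `i + 1`: `c` increases by
one if this strand is a local minimum, decreases by one if it is a local maximum, and is unchanged
otherwise. Hence `c` is a Motzkin path which is positive between its endpoints.

Conversely, let such a path have `k` up steps `u₀ < u₁ < ⋯`, hence `k` down steps `d₀ < d₁ < ⋯`,
and flat steps `f₀ < ⋯ < fₛ`. Nonnegativity of the path gives `u_q < d_q`, and its positivity in
the interior gives `u_{q+1} < d_q`; moreover `u₀` is the first step and `d_{k-1}` the last one. In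
the cyclic order `u₀, d₀, u₁, d₁, …, u_{k-1}, d_{k-1}, fₛ, …, f₀` the local minima are therefore
exactly the up steps and the local maxima exactly the down steps, so the crossing whose strands
carry the levels in this order recovers `c`.
-/

open Nat (count nth)

section UpCount

variable {ι : Type*} [Fintype ι] (σ : Equiv.Perm ι) (l : ι → ℕ)

/-- The number of pairs of successive strands `j`, `σ j` that rise from level at most `i` to level
above `i`; here `σ` sends a strand to its successor. -/
def upCount (i : ℕ) : ℕ :=
  (Finset.univ.filter fun j => l j ≤ i ∧ i < l (σ j)).card

theorem card_filter_min_le_lt_max (i : ℕ) :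
    (Finset.univ.filter fun j => min (l j) (l (σ j)) ≤ i ∧ i + 1 ≤ max (l j) (l (σ j))).card =
      2 * upCount σ l i := by
  have cyclic : ∑ j, (if l (σ j) ≤ i then 1 else 0) = ∑ j, (if l j ≤ i then 1 else 0) :=
    Equiv.sum_comp σ fun j => if l j ≤ i then 1 else 0
  have balance : ∑ j, ((if min (l j) (l (σ j)) ≤ i ∧ i + 1 ≤ max (l j) (l (σ j)) then 1 else 0) +
        (if l j ≤ i then 1 else 0)) =
      ∑ j, (2 * (if l j ≤ i ∧ i < l (σ j) then 1 else 0) + (if l (σ j) ≤ i then 1 else 0)) :=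
    Finset.sum_congr rfl fun j _ => by split_ifs <;> omega
  rw [Finset.sum_add_distrib, Finset.sum_add_distrib, ← Finset.mul_sum, cyclic] at balance
  rw [upCount, Finset.card_filter, Finset.card_filter]
  exact Nat.add_right_cancel balance

variable {σ l}

theorem upCount_eq_zero_of_lt {i : ℕ} (h : ∀ j, i < l j) : upCount σ l i = 0 :=
  Finset.card_eq_zero.mpr <| Finset.filter_eq_empty_iff.mpr fun j _ hj => (h j).not_ge hj.1

theorem upCount_eq_zero_of_le {i : ℕ} (h : ∀ j, l j ≤ i) : upCount σ l i = 0 :=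
  Finset.card_eq_zero.mpr <| Finset.filter_eq_empty_iff.mpr fun j _ hj => (h (σ j)).not_gt hj.2

/-- Raising the threshold past the level of strand `j` affects only the pairs `(σ⁻¹ j, j)` and
`(j, σ j)`. -/
theorem upCount_succ_add (hl : Function.Injective l) {i : ℕ} {j : ι}
    (hj : l j = i + 1) :
    upCount σ l (i + 1) + (if l (σ.symm j) < l j then 1 else 0) =
      upCount σ l i + (if l j < l (σ j) then 1 else 0) := by
  classical
  have at_j (k : ι) : l k = i + 1 ↔ k = j := by rw [← hj, hl.eq_iff]
  have at_pred (k : ι) : l (σ k) = i + 1 ↔ k = σ.symm j := by rw [at_j, Equiv.eq_symm_apply]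
  have pairwise : ∑ k, ((if l k ≤ i + 1 ∧ i + 1 < l (σ k) then 1 else 0) +
        (if k = σ.symm j then (if l k < l (σ k) then 1 else 0) else 0)) =
      ∑ k, ((if l k ≤ i ∧ i < l (σ k) then 1 else 0) +
        (if k = j then (if l k < l (σ k) then 1 else 0) else 0)) := by
    refine Finset.sum_congr rfl fun k _ => ?_
    simp only [← at_j, ← at_pred]
    split_ifs <;> omega
  simpa only [upCount, Finset.card_filter, Finset.sum_add_distrib, Finset.sum_ite_eq',
    Finset.mem_univ, if_true, Equiv.apply_symm_apply] using pairwise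

end UpCount

section Motzkin

/-- The path with heights `c` rises on its step from `i` to `i + 1`. -/
abbrev UpStep (c : ℕ → ℕ) (i : ℕ) : Prop := c i < c (i + 1)

/-- The path with heights `c` falls on its step from `i` to `i + 1`. -/
abbrev DownStep (c : ℕ → ℕ) (i : ℕ) : Prop := c (i + 1) < c i

/-- The path with heights `c` is horizontal on its step from `i` to `i + 1`. -/
abbrev FlatStep (c : ℕ → ℕ) (i : ℕ) : Prop := c (i + 1) = c i

/-- `c 0, …, c n` are the heights of a Motzkin path of length `n` (a lattice path with steps
`+1`, `-1`, `0`, starting and ending at height `0`) that is positive between its endpoints. -/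
structure IsPrimeMotzkinPath (n : ℕ) (c : ℕ → ℕ) : Prop where
  zero : c 0 = 0
  last : c n = 0
  pos : ∀ i, 0 < i → i < n → 0 < c i
  succ_le : ∀ i < n, c (i + 1) ≤ c i + 1
  le_succ : ∀ i < n, c i ≤ c (i + 1) + 1

theorem isPrimeMotzkinPath_upCount {ι : Type*} [Fintype ι] {σ : Equiv.Perm ι} {l : ι → ℕ} {n : ℕ}
    (hl : Set.BijOn l Set.univ (Set.Icc 1 n)) (hpos : ∀ i, 0 < i → i < n → 0 < upCount σ l i) :
    IsPrimeMotzkinPath n (upCount σ l) := by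
  have step (i : ℕ) (hi : i < n) : ∃ a ≤ 1, ∃ b ≤ 1,
      upCount σ l (i + 1) + a = upCount σ l i + b := by
    obtain ⟨j, -, hj⟩ := hl.surjOn (show i + 1 ∈ Set.Icc 1 n by grind)
    exact ⟨_, by split_ifs <;> simp, _, by split_ifs <;> simp,
      upCount_succ_add (Set.injOn_univ.mp hl.injOn) hj⟩
  exact
    { zero := upCount_eq_zero_of_lt fun j => (hl.mapsTo (Set.mem_univ j)).1
      last := upCount_eq_zero_of_le fun j => (hl.mapsTo (Set.mem_univ j)).2
      pos := hpos
      succ_le := fun i hi => by obtain ⟨a, ha, b, hb, h⟩ := step i hi; omega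
      le_succ := fun i hi => by obtain ⟨a, ha, b, hb, h⟩ := step i hi; omega }

theorem upCount_add_one_eq {ι : Type*} [Fintype ι] {σ : Equiv.Perm ι} {s : ι → ℕ} {n : ℕ}
    {c : ℕ → ℕ} (hc : IsPrimeMotzkinPath n c) (hs : Set.BijOn s Set.univ (Set.Iio n))
    (ascent_iff : ∀ j, (s j < s (σ j) ↔ UpStep c (s j)) ∧ (s j < s (σ j) ↔ DownStep c (s (σ j))))
    {i : ℕ} (hi : i ≤ n) :
    upCount σ (fun j => s j + 1) i = c i := by
  induction i with
  | zero => rw [upCount_eq_zero_of_lt fun j => (s j).succ_pos, hc.zero]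
  | succ i ih =>
    obtain ⟨j, -, rfl⟩ := hs.surjOn (Set.mem_Iio.mpr hi)
    have hinj : Function.Injective fun j => s j + 1 :=
      (add_left_injective 1).comp (Set.injOn_univ.mp hs.injOn)
    have hstep := upCount_succ_add (σ := σ) hinj (i := s j) (j := j) rfl
    have hdown := (ascent_iff (σ.symm j)).2
    rw [Equiv.apply_symm_apply] at hdown
    simp only [ih (by omega), add_lt_add_iff_right, (ascent_iff j).1, hdown] at hstep
    have := hc.succ_le (s j) hi
    have := hc.le_succ (s j) hi
    split_ifs at hstep <;> omega

end Motzkin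

section Nth

variable {p : ℕ → Prop} [DecidablePred p] {q n : ℕ}

theorem lt_card_of_lt_count (h : q < count p n) (hf : (Set.ofPred p).Finite) :
    q < hf.toFinset.card :=
  h.trans_le (Nat.count_le_card hf n)

theorem nth_mem_of_lt_count (h : q < count p n) : p (nth p q) :=
  Nat.nth_mem q (lt_card_of_lt_count h)

theorem count_nth_of_lt_count (h : q < count p n) : count p (nth p q) = q :=
  Nat.count_nth (lt_card_of_lt_count h)

theorem nth_lt_nth_of_lt_count {r : ℕ} (hqr : q < r) (h : r < count p n) : nth p q < nth p r :=
  Nat.nth_lt_nth' hqr (lt_card_of_lt_count h)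

end Nth

section Arrangement

variable {n : ℕ} {c : ℕ → ℕ}

/-- The step of the path `c` carried by the strand in position `j < n`: the up and down steps
alternate in positions `0, …, 2k - 1`, each kind in increasing order, and the flat steps follow in
decreasing order. -/
noncomputable def strandStep (n : ℕ) (c : ℕ → ℕ) (j : ℕ) : ℕ :=
  if j < 2 * count (UpStep c) n then
    if Even j then nth (UpStep c) (j / 2) else nth (DownStep c) (j / 2)
  else nth (FlatStep c) (n - 1 - j)

theorem strandStep_two_mul {q : ℕ} (hq : q < count (UpStep c) n) :
    strandStep n c (2 * q) = nth (UpStep c) q := by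
  simp [strandStep, hq]

theorem strandStep_two_mul_add_one {q : ℕ} (hq : q < count (UpStep c) n) :
    strandStep n c (2 * q + 1) = nth (DownStep c) q := by
  have hlt : 2 * q + 1 < 2 * count (UpStep c) n := by omega
  have hdiv : (2 * q + 1) / 2 = q := by omega
  simp [strandStep, hlt, hdiv]

theorem strandStep_sub {q : ℕ} (hq : 2 * count (UpStep c) n + q < n) :
    strandStep n c (n - 1 - q) = nth (FlatStep c) q := by
  rw [strandStep, if_neg (by omega), Nat.sub_sub_self (by omega)]

namespace IsPrimeMotzkinPath

theorem upStep_zero (hc : IsPrimeMotzkinPath n c) (hn : 2 ≤ n) : UpStep c 0 :=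
  hc.zero.trans_lt (hc.pos 1 one_pos hn)

theorem downStep_last (hc : IsPrimeMotzkinPath n c) (hn : 2 ≤ n) : DownStep c (n - 1) := by
  have := hc.pos (n - 1) (by omega) (by omega)
  rwa [DownStep, Nat.sub_add_cancel (by omega), hc.last]

theorem count_upStep (hc : IsPrimeMotzkinPath n c) {x : ℕ} (hx : x ≤ n) :
    count (UpStep c) x = count (DownStep c) x + c x := by
  induction x with
  | zero => simp [hc.zero]
  | succ x ih =>
    have := ih (by omega)
    have := hc.succ_le x hx
    have := hc.le_succ x hx
    rw [Nat.count_succ, Nat.count_succ]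
    split_ifs <;> omega

theorem count_downStep_eq (hc : IsPrimeMotzkinPath n c) :
    count (DownStep c) n = count (UpStep c) n := by
  rw [hc.count_upStep le_rfl, hc.last, add_zero]

theorem two_mul_count_add_count_flatStep (hc : IsPrimeMotzkinPath n c) :
    2 * count (UpStep c) n + count (FlatStep c) n = n := by
  have trichotomy (x : ℕ) :
      count (UpStep c) x + count (DownStep c) x + count (FlatStep c) x = x := by
    induction x with
    | zero => simp
    | succ x ih =>
      rw [Nat.count_succ, Nat.count_succ, Nat.count_succ]
      split_ifs <;> omega
  have := trichotomy n
  rw [hc.count_downStep_eq] at this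
  omega

theorem count_upStep_pos (hc : IsPrimeMotzkinPath n c) (hn : 2 ≤ n) : 0 < count (UpStep c) n :=
  (Nat.zero_le _).trans_lt (Nat.count_strict_mono (hc.upStep_zero hn) (by omega))

theorem strandStep_zero (hc : IsPrimeMotzkinPath n c) (hn : 2 ≤ n) : strandStep n c 0 = 0 := by
  have hfirst := strandStep_two_mul (hc.count_upStep_pos hn)
  rwa [Nat.nth_zero_of_zero (hc.upStep_zero hn)] at hfirst

theorem nth_upStep_lt_nth_downStep (hc : IsPrimeMotzkinPath n c) {q : ℕ}
    (hq : q < count (DownStep c) n) : nth (UpStep c) q < nth (DownStep c) q := by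
  have hdown : DownStep c (nth (DownStep c) q) := nth_mem_of_lt_count hq
  have hcount := hc.count_upStep (Nat.nth_lt_of_lt_count hq).le
  rw [count_nth_of_lt_count hq] at hcount
  exact Nat.nth_lt_of_lt_count (by omega)

/-- Before its last step the path falls only from height at least `2`. -/
theorem nth_upStep_succ_lt_nth_downStep (hc : IsPrimeMotzkinPath n c) {q : ℕ}
    (hq : q + 1 < count (DownStep c) n) : nth (UpStep c) (q + 1) < nth (DownStep c) q := by
  have hlt : nth (DownStep c) q < nth (DownStep c) (q + 1) :=
    nth_lt_nth_of_lt_count q.lt_succ_self hq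
  have hlast : nth (DownStep c) (q + 1) < n := Nat.nth_lt_of_lt_count hq
  have hdown : DownStep c (nth (DownStep c) q) := nth_mem_of_lt_count (q.lt_succ_self.trans hq)
  have hpos := hc.pos (nth (DownStep c) q + 1) (Nat.succ_pos _) (by omega)
  have hcount := hc.count_upStep (hlt.trans hlast).le
  rw [count_nth_of_lt_count (q.lt_succ_self.trans hq)] at hcount
  exact Nat.nth_lt_of_lt_count (by omega)

theorem nth_downStep_last (hc : IsPrimeMotzkinPath n c) (hn : 2 ≤ n) {q : ℕ}
    (hq : q + 1 = count (DownStep c) n) : nth (DownStep c) q = n - 1 := by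
  have hlast := hc.downStep_last hn
  have hcount : count (DownStep c) (n - 1 + 1) = count (DownStep c) (n - 1) + 1 :=
    Nat.count_succ_eq_succ_count_iff.mpr hlast
  rw [Nat.sub_add_cancel (by omega), ← hq] at hcount
  rw [Nat.add_right_cancel hcount, Nat.nth_count hlast]

theorem position_cases (hc : IsPrimeMotzkinPath n c) {j : ℕ} (hj : j < n) :
    (∃ q < count (UpStep c) n, j = 2 * q) ∨ (∃ q < count (DownStep c) n, j = 2 * q + 1) ∨
      ∃ q < count (FlatStep c) n, j = n - 1 - q := by
  have htotal := hc.two_mul_count_add_count_flatStep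
  rw [hc.count_downStep_eq]
  by_cases hlt : j < 2 * count (UpStep c) n
  · rcases Nat.even_or_odd' j with ⟨q, rfl | rfl⟩
    · exact Or.inl ⟨q, by omega, rfl⟩
    · exact Or.inr (Or.inl ⟨q, by omega, rfl⟩)
  · exact Or.inr (Or.inr ⟨n - 1 - j, by omega, by omega⟩)

theorem strandStep_lt (hc : IsPrimeMotzkinPath n c) {j : ℕ} (hj : j < n) :
    strandStep n c j < n := by
  have htotal := hc.two_mul_count_add_count_flatStep
  rcases hc.position_cases hj with ⟨q, hq, rfl⟩ | ⟨q, hq, rfl⟩ | ⟨q, hq, rfl⟩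
  · rw [strandStep_two_mul hq]
    exact Nat.nth_lt_of_lt_count hq
  · rw [strandStep_two_mul_add_one (hc.count_downStep_eq ▸ hq)]
    exact Nat.nth_lt_of_lt_count hq
  · rw [strandStep_sub (by omega)]
    exact Nat.nth_lt_of_lt_count hq

theorem exists_strandStep_eq (hc : IsPrimeMotzkinPath n c) {x : ℕ} (hx : x < n) :
    ∃ j < n, strandStep n c j = x := by
  have htotal := hc.two_mul_count_add_count_flatStep
  obtain hup | hflat | hdown : UpStep c x ∨ FlatStep c x ∨ DownStep c x := by omega
  · have hq : count (UpStep c) x < count (UpStep c) n := Nat.count_strict_mono hup hx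
    exact ⟨2 * count (UpStep c) x, by omega, by rw [strandStep_two_mul hq, Nat.nth_count hup]⟩
  · have hq : count (FlatStep c) x < count (FlatStep c) n := Nat.count_strict_mono hflat hx
    exact ⟨n - 1 - count (FlatStep c) x, by omega,
      by rw [strandStep_sub (by omega), Nat.nth_count hflat]⟩
  · have hq : count (DownStep c) x < count (UpStep c) n :=
      hc.count_downStep_eq ▸ Nat.count_strict_mono hdown hx
    exact ⟨2 * count (DownStep c) x + 1, by omega,
      by rw [strandStep_two_mul_add_one hq, Nat.nth_count hdown]⟩

theorem bijOn_strandStep (hc : IsPrimeMotzkinPath n c) :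
    Set.BijOn (fun j : Fin n => strandStep n c j) Set.univ (Set.Iio n) := by
  rw [← Finset.coe_univ, ← Finset.coe_range]
  have maps : Set.MapsTo (fun j : Fin n => strandStep n c j) (Finset.univ : Finset (Fin n))
      (Finset.range n) := fun j _ => by simpa using hc.strandStep_lt j.isLt
  have surj : Set.SurjOn (fun j : Fin n => strandStep n c j) (Finset.univ : Finset (Fin n))
      (Finset.range n) := fun x hx => by
    obtain ⟨j, hj, hjx⟩ := hc.exists_strandStep_eq (x := x) (by simpa using hx)
    exact ⟨⟨j, hj⟩, by simp, hjx⟩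
  exact ⟨maps, Finset.injOn_of_surjOn_of_card_le _ maps surj (by simp), surj⟩

theorem strandStep_succ_lt_of_not_upStep (hc : IsPrimeMotzkinPath n c) {j : ℕ} (hj : j + 1 < n)
    (hup : ¬ UpStep c (strandStep n c j)) :
    ¬ DownStep c (strandStep n c (j + 1)) ∧ strandStep n c (j + 1) < strandStep n c j := by
  have htotal := hc.two_mul_count_add_count_flatStep
  have hdowns := hc.count_downStep_eq
  have hn : 2 ≤ n := by omega
  rcases hc.position_cases (Nat.lt_of_succ_lt hj) with ⟨q, hq, rfl⟩ | ⟨q, hq, rfl⟩ | ⟨q, hq, rfl⟩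
  · rw [strandStep_two_mul hq] at hup
    exact absurd (nth_mem_of_lt_count hq) hup
  · rw [strandStep_two_mul_add_one (hdowns ▸ hq)]
    rcases (Nat.succ_le_of_lt hq).lt_or_eq with hnext | hlast
    · rw [show 2 * q + 1 + 1 = 2 * (q + 1) by ring, strandStep_two_mul (hdowns ▸ hnext)]
      have hmem : UpStep c (nth (UpStep c) (q + 1)) := nth_mem_of_lt_count (hdowns ▸ hnext)
      exact ⟨hmem.not_gt, hc.nth_upStep_succ_lt_nth_downStep hnext⟩
    · have hflats : count (FlatStep c) n - 1 < count (FlatStep c) n := by omega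
      rw [show 2 * q + 1 + 1 = n - 1 - (count (FlatStep c) n - 1) by omega,
        strandStep_sub (by omega), hc.nth_downStep_last hn hlast]
      have hmem : FlatStep c _ := nth_mem_of_lt_count hflats
      have hne : nth (FlatStep c) (count (FlatStep c) n - 1) ≠ n - 1 := fun h =>
        (hc.downStep_last hn).ne (h ▸ hmem)
      have hlt : nth (FlatStep c) (count (FlatStep c) n - 1) < n := Nat.nth_lt_of_lt_count hflats
      exact ⟨hmem.not_lt, by omega⟩
  · obtain ⟨r, rfl⟩ : ∃ r, q = r + 1 := Nat.exists_eq_add_one.mpr (by omega)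
    rw [show n - 1 - (r + 1) + 1 = n - 1 - r by omega, strandStep_sub (by omega),
      strandStep_sub (by omega)]
    have hmem : FlatStep c (nth (FlatStep c) r) := nth_mem_of_lt_count (r.lt_succ_self.trans hq)
    exact ⟨hmem.not_lt, nth_lt_nth_of_lt_count r.lt_succ_self hq⟩

theorem strandStep_lt_succ_of_upStep (hc : IsPrimeMotzkinPath n c) {j : ℕ} (hj : j < n)
    (hup : UpStep c (strandStep n c j)) :
    j + 1 < n ∧ DownStep c (strandStep n c (j + 1)) ∧
      strandStep n c j < strandStep n c (j + 1) := by
  have htotal := hc.two_mul_count_add_count_flatStep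
  have hdowns := hc.count_downStep_eq
  rcases hc.position_cases hj with ⟨q, hq, rfl⟩ | ⟨q, hq, rfl⟩ | ⟨q, hq, rfl⟩
  · rw [strandStep_two_mul hq, strandStep_two_mul_add_one hq]
    rw [← hdowns] at hq
    exact ⟨by omega, nth_mem_of_lt_count hq, hc.nth_upStep_lt_nth_downStep hq⟩
  · rw [strandStep_two_mul_add_one (hdowns ▸ hq)] at hup
    have hmem : DownStep c (nth (DownStep c) q) := nth_mem_of_lt_count hq
    exact absurd hup hmem.not_gt
  · rw [strandStep_sub (by omega)] at hup
    have hmem : FlatStep c (nth (FlatStep c) q) := nth_mem_of_lt_count hq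
    exact absurd hup hmem.not_gt

theorem strandStep_lt_cyc_iff (hc : IsPrimeMotzkinPath n c) (hn : 2 ≤ n) (j : Fin n) :
    (strandStep n c j < strandStep n c (cyc j) ↔ UpStep c (strandStep n c j)) ∧
      (strandStep n c j < strandStep n c (cyc j) ↔ DownStep c (strandStep n c (cyc j))) := by
  by_cases hup : UpStep c (strandStep n c j)
  · obtain ⟨hj, hdown, hlt⟩ := hc.strandStep_lt_succ_of_upStep j.isLt hup
    simp only [cyc, Nat.mod_eq_of_lt hj]
    exact ⟨iff_of_true hlt hup, iff_of_true hlt hdown⟩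
  · suffices h : ¬ DownStep c (strandStep n c (cyc j)) ∧
        strandStep n c (cyc j) ≤ strandStep n c j from
      ⟨iff_of_false h.2.not_gt hup, iff_of_false h.2.not_gt h.1⟩
    rcases (Nat.succ_le_of_lt j.isLt).lt_or_eq with hj | hj
    · simp only [cyc, Nat.mod_eq_of_lt hj]
      exact (hc.strandStep_succ_lt_of_not_upStep hj hup).imp_right le_of_lt
    · simp only [cyc, ← Nat.succ_eq_add_one, hj, Nat.mod_self, hc.strandStep_zero hn]
      exact ⟨(hc.upStep_zero hn).not_gt, Nat.zero_le _⟩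

end IsPrimeMotzkinPath

end Arrangement

/-- The cyclic shift of the strands, as a permutation. -/
def cycPerm (n : ℕ) : Equiv.Perm (Fin n) where
  toFun := cyc
  invFun := cycPred
  left_inv j := Fin.ext <| by
    have := j.isLt
    simp [cyc, cycPred, show j.val + 1 + (n - 1) = j + n by omega, Nat.mod_eq_of_lt this]
  right_inv j := Fin.ext <| by
    have := j.isLt
    simp [cyc, cycPred, show j.val + (n - 1) + 1 = j + n by omega, Nat.mod_eq_of_lt this]

theorem bipSize_eq_four_mul_upCount (n : ℕ) (l : Fin n → ℕ) (i : ℕ) :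
    bipSize n l i = 4 * upCount (cycPerm n) l i := by
  rw [show 4 = 2 * 2 from rfl, mul_assoc, ← card_filter_min_le_lt_max]
  rfl

theorem IsPrimeMotzkinPath.exists_bijOn_upCount_eq {n : ℕ} {c : ℕ → ℕ}
    (hc : IsPrimeMotzkinPath n c) (hn : 2 ≤ n) :
    ∃ l : Fin n → ℕ, Set.BijOn l Set.univ (Set.Icc 1 n) ∧
      ∀ i ≤ n, upCount (cycPerm n) l i = c i := by
  have shift : Set.BijOn (· + 1) (Set.Iio n) (Set.Icc 1 n) :=
    ⟨fun x hx => ⟨Nat.succ_pos x, hx⟩, (add_left_injective 1).injOn,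
      fun x hx => ⟨x - 1, by grind, Nat.sub_add_cancel hx.1⟩⟩
  exact ⟨_, shift.comp hc.bijOn_strandStep, fun i hi =>
    upCount_add_one_eq hc hc.bijOn_strandStep (hc.strandStep_lt_cyc_iff hn) hi⟩

section Signature

variable {n : ℕ} {m : ℕ → ℕ}

theorem four_dvd_of_abs_sub_eq (h1 : m 1 = 4)
    (hstep : ∀ i, 1 ≤ i → i ≤ n - 2 →
      |(m i : ℤ) - (m (i + 1) : ℤ)| = 0 ∨ |(m i : ℤ) - (m (i + 1) : ℤ)| = 4)
    {i : ℕ} (hi : 1 ≤ i) (hin : i ≤ n - 1) : 4 ∣ m i := by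
  induction i, hi using Nat.le_induction with
  | base => rw [h1]
  | succ i hi ih =>
    have := ih (by omega)
    have := hstep i hi (by omega)
    grind

theorem exists_isPrimeMotzkinPath (hn : 2 ≤ n) (hpos : ∀ i, 1 ≤ i → i ≤ n - 1 → 0 < m i)
    (h1 : m 1 = 4) (hlast : m (n - 1) = 4)
    (hstep : ∀ i, 1 ≤ i → i ≤ n - 2 →
      |(m i : ℤ) - (m (i + 1) : ℤ)| = 0 ∨ |(m i : ℤ) - (m (i + 1) : ℤ)| = 4) :
    ∃ c, IsPrimeMotzkinPath n c ∧ ∀ i, 1 ≤ i → i ≤ n - 1 → 4 * c i = m i := by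
  set c : ℕ → ℕ := fun i => if 1 ≤ i ∧ i ≤ n - 1 then m i / 4 else 0 with c_def
  have hcm (i : ℕ) (hi : 1 ≤ i) (hin : i ≤ n - 1) : 4 * c i = m i := by
    rw [c_def]
    simp only [hi, hin, and_self, if_true]
    exact Nat.mul_div_cancel' (four_dvd_of_abs_sub_eq h1 hstep hi hin)
  have c_zero : c 0 = 0 := by simp [c]
  have c_last : c n = 0 := if_neg (by omega)
  have close (i : ℕ) (hi : i < n) : c (i + 1) ≤ c i + 1 ∧ c i ≤ c (i + 1) + 1 := by
    rcases Nat.eq_zero_or_pos i with rfl | hi0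
    · have := hcm 1 le_rfl (by omega)
      rw [zero_add]
      omega
    by_cases hin : i + 1 = n
    · have := hcm i hi0 (by omega)
      rw [← hin, Nat.add_sub_cancel] at hlast
      rw [hin, c_last]
      omega
    · have := hcm i hi0 (by omega)
      have := hcm (i + 1) (by omega) (by omega)
      have := hstep i hi0 (by omega)
      grind
  refine ⟨c, ⟨c_zero, c_last, fun i hi hin => ?_, fun i hi => (close i hi).1,
    fun i hi => (close i hi).2⟩, hcm⟩
  have := hcm i hi (by omega)
  have := hpos i hi (by omega)
  omega

theorem IsPrimeMotzkinPath.signature_conditions {c : ℕ → ℕ} (hc : IsPrimeMotzkinPath n c)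
    (hn : 2 ≤ n) (hcm : ∀ i, 1 ≤ i → i ≤ n - 1 → 4 * c i = m i) :
    m 1 = 4 ∧ m (n - 1) = 4 ∧ ∀ i, 1 ≤ i → i ≤ n - 2 →
      |(m i : ℤ) - (m (i + 1) : ℤ)| = 0 ∨ |(m i : ℤ) - (m (i + 1) : ℤ)| = 4 := by
  have hfirst : c 1 = 1 := by
    have := hc.succ_le 0 (by omega)
    rw [hc.zero, zero_add] at this
    exact this.antisymm (hc.pos 1 one_pos hn)
  have hlast : c (n - 1) = 1 := by
    have := hc.le_succ (n - 1) (by omega)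
    rw [Nat.sub_add_cancel (by omega), hc.last] at this
    exact this.antisymm (hc.pos (n - 1) (by omega) (by omega))
  refine ⟨by rw [← hcm 1 le_rfl (by omega), hfirst],
    by rw [← hcm (n - 1) (by omega) le_rfl, hlast], fun i hi hin => ?_⟩
  have := hcm i hi (by omega)
  have := hcm (i + 1) (by omega) (by omega)
  have := hc.succ_le i (by omega)
  have := hc.le_succ i (by omega)
  grind

end Signature

/-- Characterization of realizable size signatures: a sequence
`(m_1, …, m_{n-1})` of positive integers is realized as the size signature of some
`n`-crossing iff `m_1 = m_{n-1} = 4` and adjacent entries differ by `0` or `4`. -/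
theorem realizable_signature_iff
    (n : ℕ) (hn : 2 ≤ n) (m : ℕ → ℕ)
    (hpos : ∀ i, 1 ≤ i → i ≤ n - 1 → 0 < m i) :
    (∃ l : Fin n → ℕ, Set.BijOn l Set.univ (Set.Icc 1 n) ∧
        ∀ i, 1 ≤ i → i ≤ n - 1 → bipSize n l i = m i) ↔
      (m 1 = 4 ∧ m (n - 1) = 4 ∧
        ∀ i, 1 ≤ i → i ≤ n - 2 →
          |(m i : ℤ) - (m (i + 1) : ℤ)| = 0 ∨ |(m i : ℤ) - (m (i + 1) : ℤ)| = 4) := by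
  constructor
  · rintro ⟨l, hl, hlm⟩
    have hcm (i : ℕ) (hi : 1 ≤ i) (hin : i ≤ n - 1) : 4 * upCount (cycPerm n) l i = m i :=
      (bipSize_eq_four_mul_upCount n l i).symm.trans (hlm i hi hin)
    have hc : IsPrimeMotzkinPath n (upCount (cycPerm n) l) :=
      isPrimeMotzkinPath_upCount hl fun i hi hin => by
        have := hpos i hi (by omega)
        rw [← hcm i hi (by omega)] at this
        omega
    exact hc.signature_conditions hn hcm
  · rintro ⟨h1, hlast, hstep⟩
    obtain ⟨c, hc, hcm⟩ := exists_isPrimeMotzkinPath hn hpos h1 hlast hstep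
    obtain ⟨l, hl, hlc⟩ := hc.exists_bijOn_upCount_eq hn
    refine ⟨l, hl, fun i hi hin => ?_⟩
    rw [bipSize_eq_four_mul_upCount, hlc i (by omega), hcm i hi hin]
end
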